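/- Let d ≥ 1 and ν > 0. There exist a C^∞ function h₀ : ℝ^d → ℝ that is 2π-periodic in each coordinate with ∫_{[−π,π]^d} h₀(x) dx = 0 and sup_{x ∈ ℝ^d} |∇h₀(x)| < 1, a time t₀ > 0, and a function h : [0,t₀] × ℝ^d → ℝ, 2π-periodic in each spatial coordinate and smooth, with h(0,·) = h₀, which is a classical solution of ∂_t h = ∇·((|∇h|² − 1)∇h) − νΔ²h on [0,t₀] × ℝ^d, such that sup_{x ∈ ℝ^d} |∇h(t₀,x)| > 1. -/

import Mathlib

open Real MeasureTheory Set Filter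
open scoped ENNReal

noncomputable section

/-- `ℝ^d` with the Euclidean norm. -/
abbrev Ed (d : ℕ) := EuclideanSpace ℝ (Fin d)

/-- The fundamental domain `[-π,π]^d` of the torus `𝕋^d = ℝ^d/2πℤ^d`. -/
def Qd (d : ℕ) : Set (Ed d) := {x | ∀ i, |x i| ≤ Real.pi}

/-- The partial derivative `∂_{x_j} f` of `f : ℝ^d → ℝ`. -/
noncomputable def pd {d : ℕ} (f : Ed d → ℝ) (j : Fin d) (x : Ed d) : ℝ :=
  fderiv ℝ f x (EuclideanSpace.single j 1)

/-- `|∇f|²`, the squared Euclidean norm of the spatial gradient. -/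
noncomputable def gradSq {d : ℕ} (f : Ed d → ℝ) (x : Ed d) : ℝ := ∑ j, pd f j x ^ 2

/-- `|∇f|`, the Euclidean norm of the spatial gradient. -/
noncomputable def gradNorm {d : ℕ} (f : Ed d → ℝ) (x : Ed d) : ℝ := Real.sqrt (gradSq f x)

/-- The Laplacian `Δf = Σ_j ∂_{x_j}∂_{x_j} f`. -/
noncomputable def lapl {d : ℕ} (f : Ed d → ℝ) (x : Ed d) : ℝ := ∑ j, pd (pd f j) j x

/-- The slope-selection divergence term `∇·((|∇f|²−1)∇f) = Σ_j ∂_{x_j}((|∇f|²−1)∂_{x_j}f)`. -/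
noncomputable def slopeDiv {d : ℕ} (f : Ed d → ℝ) (x : Ed d) : ℝ :=
  ∑ j, pd (fun y => (gradSq f y - 1) * pd f j y) j x

/-- `f` is `2π`-periodic in each coordinate. -/
def PeriodicSpace {d : ℕ} (f : Ed d → ℝ) : Prop :=
  ∀ (j : Fin d) (x : Ed d), f (x + (2 * Real.pi) • EuclideanSpace.single j 1) = f x

/-!
The biharmonic heat flow `∂ₜv = -∂ₓ⁴v` has no maximum principle: a profile with `v'' = 0` and
`v'''' < 0` at its maximum grows there. Looking for solutions that depend on one coordinate only,
the rescaling `h (t, x) = K⁻¹ u (1 + ν K⁴ t, K xᵢ)` preserves slopes and turns the equation into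
`∂ₜu = ε ∂ₓ((∂ₓu)³ - ∂ₓu) - ∂ₓ⁴u` with `ε = 1 / (ν K²)`, so for large `K` the nonlinearity is a
small perturbation. Its solution is the fixed point of Duhamel's formula for the Fourier
coefficients of the slope, which is a contraction in an exponentially weighted `ℓ^∞` space because
`k² ≤ k⁴` absorbs the two derivatives; its slope stays uniformly close to that of the biharmonic
flow, and so crosses `1`.
-/

/-! ### Exponentially weighted sequences and their convolution -/

/-- A summable weight with enough decay to make all the trigonometric series below smooth. The
factor `(1 + k ^ 2)⁻¹` makes it stable under convolution up to a constant. -/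
def expWeight (k : ℤ) : ℝ := exp (-|(k : ℝ)|) / (1 + (k : ℝ) ^ 2)

lemma expWeight_pos (k : ℤ) : 0 < expWeight k := by
  unfold expWeight
  positivity

lemma summable_inv_one_add_sq_int : Summable fun i : ℤ => (1 + (i : ℝ) ^ 2)⁻¹ := by
  have hsq : Summable fun i : ℤ => 1 / (i : ℝ) ^ 2 := Real.summable_one_div_int_pow.2 one_lt_two
  refine hsq.of_norm_bounded_eventually ?_
  filter_upwards [(finite_singleton (0 : ℤ)).compl_mem_cofinite] with i hi
  have hi' : (i : ℝ) ≠ 0 := by simpa using hi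
  rw [Real.norm_of_nonneg (by positivity), ← one_div]
  exact one_div_le_one_div_of_le (by positivity) (by linarith)

lemma summable_abs_pow_mul_expWeight (m : ℕ) :
    Summable fun k : ℤ => |(k : ℝ)| ^ m * expWeight k := by
  have hexp : Summable fun k : ℤ => |(k : ℝ)| ^ m * exp (-|(k : ℝ)|) := by
    have hnat := Real.summable_pow_mul_exp_neg_nat_mul m one_pos
    apply Summable.of_nat_of_neg <;> simpa using hnat
  refine hexp.of_nonneg_of_le (fun k => mul_nonneg (by positivity) (expWeight_pos k).le)
    fun k => ?_
  unfold expWeight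
  gcongr
  exact div_le_self (by positivity) (by nlinarith [sq_nonneg (k : ℝ)])

lemma summable_expWeight : Summable expWeight := by
  simpa using summable_abs_pow_mul_expWeight 0

/-- The constant in the bound `expWeight ∗ expWeight ≤ convConst * expWeight`. -/
def convConst : ℝ := 4 * ∑' i : ℤ, (1 + (i : ℝ) ^ 2)⁻¹

lemma inv_one_add_sq_mul_le (x y : ℝ) :
    (1 + x ^ 2)⁻¹ * (1 + y ^ 2)⁻¹ ≤
      (1 + (x + y) ^ 2)⁻¹ * (2 * ((1 + x ^ 2)⁻¹ + (1 + y ^ 2)⁻¹)) := by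
  field_simp
  nlinarith [sq_nonneg (x - y)]

lemma expWeight_mul_expWeight_sub_le (k i : ℤ) :
    expWeight i * expWeight (k - i) ≤
      2 * expWeight k * ((1 + (i : ℝ) ^ 2)⁻¹ + (1 + ((k - i : ℤ) : ℝ) ^ 2)⁻¹) := by
  have hexp : exp (-|(i : ℝ)|) * exp (-|((k - i : ℤ) : ℝ)|) ≤ exp (-|(k : ℝ)|) := by
    rw [← Real.exp_add, Real.exp_le_exp]
    have := abs_add_le (i : ℝ) ((k - i : ℤ) : ℝ)
    rw [← Int.cast_add, add_sub_cancel] at this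
    linarith
  have hrat := inv_one_add_sq_mul_le i ((k - i : ℤ) : ℝ)
  rw [← Int.cast_add, add_sub_cancel] at hrat
  calc expWeight i * expWeight (k - i)
      = exp (-|(i : ℝ)|) * exp (-|((k - i : ℤ) : ℝ)|) *
          ((1 + (i : ℝ) ^ 2)⁻¹ * (1 + ((k - i : ℤ) : ℝ) ^ 2)⁻¹) := by
        unfold expWeight; ring
    _ ≤ exp (-|(k : ℝ)|) * ((1 + (k : ℝ) ^ 2)⁻¹ *
          (2 * ((1 + (i : ℝ) ^ 2)⁻¹ + (1 + ((k - i : ℤ) : ℝ) ^ 2)⁻¹))) := by gcongr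
    _ = _ := by unfold expWeight; ring

lemma hasSum_inv_one_add_sq_add_reflect (k : ℤ) :
    HasSum (fun i : ℤ => (1 + (i : ℝ) ^ 2)⁻¹ + (1 + ((k - i : ℤ) : ℝ) ^ 2)⁻¹)
      (convConst / 2) := by
  have h := summable_inv_one_add_sq_int.hasSum
  have hreflect := (Equiv.subLeft k).hasSum_iff.2 h
  convert! h.add hreflect using 1
  unfold convConst
  ring

lemma summable_expWeight_mul_expWeight_sub (k : ℤ) :
    Summable fun i : ℤ => expWeight i * expWeight (k - i) :=
  ((hasSum_inv_one_add_sq_add_reflect k).summable.mul_left _).of_nonneg_of_le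
    (fun _ => (mul_pos (expWeight_pos _) (expWeight_pos _)).le)
    (expWeight_mul_expWeight_sub_le k)

lemma tsum_expWeight_mul_expWeight_sub_le (k : ℤ) :
    ∑' i : ℤ, expWeight i * expWeight (k - i) ≤ convConst * expWeight k := by
  have hmajorant := (hasSum_inv_one_add_sq_add_reflect k).mul_left (2 * expWeight k)
  refine (hasSum_le (expWeight_mul_expWeight_sub_le k)
    (summable_expWeight_mul_expWeight_sub k).hasSum hmajorant).trans_eq ?_
  ring

/-- Membership of `a` in the ball of radius `A` of the `ℓ^∞` space weighted by `expWeight`. -/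
def HasExpBound (A : ℝ) (a : ℤ → ℝ) : Prop := ∀ k, |a k| ≤ A * expWeight k

/-- The convolution of two sequences on `ℤ`, i.e. the Fourier coefficients of a product. -/
def intConv (a b : ℤ → ℝ) (k : ℤ) : ℝ := ∑' i, a i * b (k - i)

/-- The Fourier coefficients of `v ^ 3 - v`, where `v` has Fourier coefficients `a`. -/
def slopeForcing (a : ℤ → ℝ) : ℤ → ℝ := intConv (intConv a a) a - a

lemma intConv_even {a b : ℤ → ℝ} (ha : Function.Even a) (hb : Function.Even b) :
    Function.Even (intConv a b) := fun k => by
  unfold intConv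
  rw [← (Equiv.neg ℤ).tsum_eq]
  refine tsum_congr fun i => ?_
  rw [Equiv.neg_apply, ha, ← hb, neg_sub, sub_neg_eq_add, add_comm, ← sub_eq_add_neg]

namespace HasExpBound

variable {A B : ℝ} {a b : ℤ → ℝ}

lemma nonneg (ha : HasExpBound A a) : 0 ≤ A :=
  nonneg_of_mul_nonneg_left ((abs_nonneg _).trans (ha 0)) (expWeight_pos 0)

lemma mono (ha : HasExpBound A a) (hAB : A ≤ B) : HasExpBound B a := fun k =>
  (ha k).trans (mul_le_mul_of_nonneg_right hAB (expWeight_pos k).le)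

lemma add (ha : HasExpBound A a) (hb : HasExpBound B b) : HasExpBound (A + B) (a + b) := fun k =>
  (abs_add_le _ _).trans (by linarith [ha k, hb k])

lemma sub (ha : HasExpBound A a) (hb : HasExpBound B b) : HasExpBound (A + B) (a - b) := fun k =>
  (abs_sub _ _).trans (by linarith [ha k, hb k])

lemma summable_abs (ha : HasExpBound A a) : Summable fun k => |a k| :=
  (summable_expWeight.mul_left A).of_nonneg_of_le (fun _ => abs_nonneg _) ha

lemma tsum_abs_le (ha : HasExpBound A a) : ∑' k, |a k| ≤ A * ∑' k, expWeight k := by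
  rw [← tsum_mul_left]
  exact ha.summable_abs.tsum_le_tsum ha (summable_expWeight.mul_left A)

lemma abs_pow_mul_le (ha : HasExpBound A a) (m : ℕ) (k : ℤ) :
    |(k : ℝ) ^ m * a k| ≤ A * (|(k : ℝ)| ^ m * expWeight k) := by
  rw [abs_mul, abs_pow, mul_left_comm]
  exact mul_le_mul_of_nonneg_left (ha k) (by positivity)

lemma summable_abs_pow_mul (ha : HasExpBound A a) (m : ℕ) :
    Summable fun k : ℤ => |(k : ℝ) ^ m * a k| :=
  ((summable_abs_pow_mul_expWeight m).mul_left A).of_nonneg_of_le (fun _ => abs_nonneg _)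
    (ha.abs_pow_mul_le m)

lemma norm_mul_sub_le (ha : HasExpBound A a) (hb : HasExpBound B b) (k i : ℤ) :
    ‖a i * b (k - i)‖ ≤ A * B * (expWeight i * expWeight (k - i)) :=
  calc ‖a i * b (k - i)‖ = |a i| * |b (k - i)| := norm_mul _ _
    _ ≤ A * expWeight i * (B * expWeight (k - i)) :=
        mul_le_mul (ha _) (hb _) (abs_nonneg _) ((abs_nonneg _).trans (ha _))
    _ = _ := by ring

lemma summable_mul_sub (ha : HasExpBound A a) (hb : HasExpBound B b) (k : ℤ) :
    Summable fun i => a i * b (k - i) :=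
  ((summable_expWeight_mul_expWeight_sub k).mul_left _).of_norm_bounded (ha.norm_mul_sub_le hb k)

lemma conv (ha : HasExpBound A a) (hb : HasExpBound B b) :
    HasExpBound (convConst * A * B) (intConv a b) := fun k =>
  calc |∑' i, a i * b (k - i)|
      ≤ ∑' i, A * B * (expWeight i * expWeight (k - i)) :=
        tsum_of_norm_bounded ((summable_expWeight_mul_expWeight_sub k).mul_left _).hasSum
          (ha.norm_mul_sub_le hb k)
    _ ≤ A * B * (convConst * expWeight k) := by
        rw [tsum_mul_left]
        exact mul_le_mul_of_nonneg_left (tsum_expWeight_mul_expWeight_sub_le k)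
          (mul_nonneg ha.nonneg hb.nonneg)
    _ = convConst * A * B * expWeight k := by ring

lemma intConv_sub_intConv {a' b' : ℤ → ℝ} {A' B' : ℝ} (ha : HasExpBound A a)
    (ha' : HasExpBound A' a') (hb : HasExpBound B b) (hb' : HasExpBound B' b') :
    intConv a b - intConv a' b' = intConv (a - a') b + intConv a' (b - b') := by
  ext k
  unfold intConv
  rw [Pi.sub_apply, Pi.add_apply,
    ← (ha.summable_mul_sub hb k).tsum_sub (ha'.summable_mul_sub hb' k),
    ← ((ha.sub ha').summable_mul_sub hb k).tsum_add (ha'.summable_mul_sub (hb.sub hb') k)]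
  exact tsum_congr fun i => by simp only [Pi.sub_apply]; ring

end HasExpBound

/-- The Lipschitz constant of `slopeForcing` on the ball of radius `A` of `HasExpBound`. -/
def forcingLip (A : ℝ) : ℝ := 3 * convConst ^ 2 * A ^ 2 + 1

lemma HasExpBound.slopeForcing_sub {A D : ℝ} {a b : ℤ → ℝ} (ha : HasExpBound A a)
    (hb : HasExpBound A b) (hab : HasExpBound D (a - b)) :
    HasExpBound (forcingLip A * D) (slopeForcing a - slopeForcing b) := by
  have hsq : HasExpBound (2 * convConst * A * D) (intConv a a - intConv b b) := by
    rw [ha.intConv_sub_intConv hb ha hb]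
    exact ((hab.conv ha).add (hb.conv hab)).mono (le_of_eq (by ring))
  have hcube : HasExpBound (3 * convConst ^ 2 * A ^ 2 * D)
      (intConv (intConv a a) a - intConv (intConv b b) b) := by
    rw [(ha.conv ha).intConv_sub_intConv (hb.conv hb) ha hb]
    exact ((hsq.conv ha).add ((hb.conv hb).conv hab)).mono (le_of_eq (by ring))
  have hsplit : slopeForcing a - slopeForcing b =
      intConv (intConv a a) a - intConv (intConv b b) b - (a - b) := by
    unfold slopeForcing; abel
  rw [hsplit]
  exact (hcube.sub hab).mono (le_of_eq (by unfold forcingLip; ring))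

lemma slopeForcing_zero : slopeForcing 0 = 0 := by
  ext k
  simp [slopeForcing, intConv]

lemma slopeForcing_even {a : ℤ → ℝ} (ha : Function.Even a) : Function.Even (slopeForcing a) :=
  fun k => by
    simp only [slopeForcing, Pi.sub_apply, intConv_even (intConv_even ha ha) ha k, ha k]

/-! ### Trigonometric series -/

/-- The real trigonometric series `∑ₖ aₖ cos (k x + θ)`. A phase shift by `π / 2` accompanies each
differentiation, so cosine series, sine series and all their derivatives are of this form. -/
def trigSeries (θ : ℝ) (a : ℤ → ℝ) (x : ℝ) : ℝ := ∑' k : ℤ, a k * cos (k * x + θ)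

lemma abs_mul_cos_le (r y : ℝ) : |r * cos y| ≤ |r| := by
  rw [abs_mul]
  exact mul_le_of_le_one_right (abs_nonneg r) (Real.abs_cos_le_one y)

section TrigSeries

variable {a b : ℤ → ℝ} (θ : ℝ)

lemma summable_norm_mul_cos (ha : Summable fun k => |a k|) (x : ℝ) :
    Summable fun k : ℤ => ‖a k * cos (k * x + θ)‖ :=
  ha.of_nonneg_of_le (fun _ => norm_nonneg _) fun _ => abs_mul_cos_le _ _

lemma abs_trigSeries_le (ha : Summable fun k => |a k|) (x : ℝ) :
    |trigSeries θ a x| ≤ ∑' k, |a k| :=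
  tsum_of_norm_bounded (f := fun k : ℤ => a k * cos (k * x + θ)) ha.hasSum
    fun _ => abs_mul_cos_le _ _

lemma trigSeries_sub (ha : Summable fun k => |a k|) (hb : Summable fun k => |b k|) (x : ℝ) :
    trigSeries θ (a - b) x = trigSeries θ a x - trigSeries θ b x := by
  unfold trigSeries
  rw [← (summable_norm_mul_cos θ ha x).of_norm.tsum_sub (summable_norm_mul_cos θ hb x).of_norm]
  exact tsum_congr fun k => sub_mul _ _ _

lemma trigSeries_periodic (a : ℤ → ℝ) : Function.Periodic (trigSeries θ a) (2 * π) := fun x => by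
  refine tsum_congr fun k => ?_
  rw [← Real.cos_add_int_mul_two_pi (k * x + θ) k]
  ring_nf

lemma trigSeries_neg_pi_div_two_odd (a : ℤ → ℝ) : Function.Odd (trigSeries (-(π / 2)) a) :=
  fun x => by
    unfold trigSeries
    rw [← tsum_neg]
    refine tsum_congr fun k => ?_
    rw [← sub_eq_add_neg, ← sub_eq_add_neg, Real.cos_sub_pi_div_two, Real.cos_sub_pi_div_two,
      mul_neg, Real.sin_neg, mul_neg]

lemma trigSeries_neg_pi_div_two_of_even (ha : Function.Even a) (x : ℝ) :
    trigSeries (-(π / 2)) a x = 0 := by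
  have heven : trigSeries (-(π / 2)) a (-x) = trigSeries (-(π / 2)) a x := by
    unfold trigSeries
    rw [← (Equiv.neg ℤ).tsum_eq]
    refine tsum_congr fun k => ?_
    simp [ha k]
  linarith [heven, trigSeries_neg_pi_div_two_odd a x]

lemma hasDerivAt_trigSeries (ha : Summable fun k => |a k|)
    (hka : Summable fun k : ℤ => |(k : ℝ) * a k|) (x : ℝ) :
    HasDerivAt (trigSeries θ a) (trigSeries (θ + π / 2) (fun k => k * a k) x) x := by
  refine hasDerivAt_tsum hka (g := fun (k : ℤ) y => a k * cos (k * y + θ))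
    (g' := fun (k : ℤ) y => k * a k * cos (k * y + (θ + π / 2)))
    (fun k y => ?_) (fun k y => abs_mul_cos_le _ _) (summable_norm_mul_cos θ ha 0).of_norm x
  have hphase : HasDerivAt (fun y : ℝ => (k : ℝ) * y + θ) k y := by
    simpa using ((hasDerivAt_id y).const_mul (k : ℝ)).add_const θ
  refine (hphase.cos.const_mul (a k)).congr_deriv ?_
  rw [← add_assoc, Real.cos_add_pi_div_two]
  ring

lemma hasDerivAt_trigSeries_param {a a' : ℝ → ℤ → ℝ} {v : ℤ → ℝ} {S : Set ℝ} (hS : IsOpen S)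
    (hSc : IsPreconnected S) (hv : Summable v) (ha' : ∀ s ∈ S, ∀ k, |a' s k| ≤ v k)
    (hda : ∀ s ∈ S, ∀ k, HasDerivAt (fun r => a r k) (a' s k) s) {t : ℝ} (ht : t ∈ S)
    (ha : Summable fun k => |a t k|) (x : ℝ) :
    HasDerivAt (fun s => trigSeries θ (a s) x) (trigSeries θ (a' t) x) t :=
  hasDerivAt_tsum_of_isPreconnected hv hS hSc (g := fun (k : ℤ) s => a s k * cos (k * x + θ))
    (fun k s hs => (hda s hs k).mul_const _)
    (fun k s hs => (abs_mul_cos_le _ _).trans (ha' s hs k)) ht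
    (summable_norm_mul_cos θ ha x).of_norm ht

end TrigSeries

lemma tsum_prod_eq_tsum_tsum_sub {G : Type*} [AddCommGroup G] {f : G × G → ℝ} (hf : Summable f) :
    ∑' p, f p = ∑' k, ∑' i, f (i, k - i) := by
  let e : G × G ≃ G × G :=
    { toFun := fun p => (p.2, p.1 - p.2)
      invFun := fun p => (p.1 + p.2, p.1)
      left_inv := fun p => by simp
      right_inv := fun p => by simp }
  rw [← e.tsum_eq]
  exact (e.summable_iff.2 hf).tsum_prod

lemma hasSum_trigSeries_mul_trigSeries {a b : ℤ → ℝ} (ha : Summable fun k => |a k|)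
    (hb : Summable fun k => |b k|) (φ θ x : ℝ) :
    HasSum (fun p : ℤ × ℤ => a p.1 * cos (p.1 * x + φ) * (b p.2 * cos (p.2 * x + θ)))
      (trigSeries φ a x * trigSeries θ b x) := by
  have hφ := summable_norm_mul_cos φ ha x
  have hθ := summable_norm_mul_cos θ hb x
  rw [trigSeries, trigSeries, tsum_mul_tsum_of_summable_norm hφ hθ]
  exact (summable_mul_of_summable_norm hφ hθ).hasSum

lemma trigSeries_intConv {a b : ℤ → ℝ} (ha : Summable fun k => |a k|)
    (hb : Summable fun k => |b k|) (φ θ x : ℝ) :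
    trigSeries (φ + θ) (intConv a b) x = trigSeries φ a x * trigSeries θ b x -
      trigSeries (φ - π / 2) a x * trigSeries (θ - π / 2) b x := by
  have hprod := (hasSum_trigSeries_mul_trigSeries ha hb φ θ x).sub
    (hasSum_trigSeries_mul_trigSeries ha hb (φ - π / 2) (θ - π / 2) x)
  rw [← hprod.tsum_eq, tsum_prod_eq_tsum_tsum_sub hprod.summable, trigSeries]
  simp only [intConv, ← tsum_mul_right]
  congr! 4 with k i
  have hphase : (k : ℝ) * x + (φ + θ) = (i * x + φ) + ((k - i : ℤ) * x + θ) := by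
    push_cast; ring
  rw [hphase, Real.cos_add, ← add_sub_assoc, ← add_sub_assoc, Real.cos_sub_pi_div_two,
    Real.cos_sub_pi_div_two]
  ring

lemma trigSeries_intConv_of_even {a b : ℤ → ℝ} (ha : Summable fun k => |a k|)
    (hb : Summable fun k => |b k|) (hae : Function.Even a) (θ x : ℝ) :
    trigSeries θ (intConv a b) x = trigSeries 0 a x * trigSeries θ b x := by
  have h := trigSeries_intConv ha hb 0 θ x
  rwa [zero_add, zero_sub, trigSeries_neg_pi_div_two_of_even hae, zero_mul, sub_zero] at h

lemma trigSeries_cube {A : ℝ} {a : ℤ → ℝ} (ha : HasExpBound A a) (hae : Function.Even a)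
    (x : ℝ) : trigSeries 0 (intConv (intConv a a) a) x = trigSeries 0 a x ^ 3 := by
  rw [trigSeries_intConv_of_even (ha.conv ha).summable_abs ha.summable_abs (intConv_even hae hae),
    trigSeries_intConv_of_even ha.summable_abs ha.summable_abs hae]
  ring

/-! ### Duhamel's formula and the fixed point -/

/-- The solution of `y' = -κ y + F`, `y 0 = 0`, by Duhamel's formula; it is frozen at its initial
value for negative times, so that continuous bounded `F : ℝ → ℝ` give such functions again. -/
def duhamel (κ : ℝ) (F : ℝ → ℝ) (t : ℝ) : ℝ :=
  exp (-κ * max t 0) * ∫ s in (0 : ℝ)..max t 0, exp (κ * s) * F s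

section Duhamel

variable {κ : ℝ} {F G : ℝ → ℝ}

lemma duhamel_zero_right (κ t : ℝ) : duhamel κ 0 t = 0 := by
  simp [duhamel]

lemma continuous_duhamel (κ : ℝ) (hF : Continuous F) : Continuous (duhamel κ F) := by
  have hprimitive : Continuous fun u => ∫ s in (0 : ℝ)..u, exp (κ * s) * F s :=
    intervalIntegral.continuous_primitive
      (fun a b => Continuous.intervalIntegrable (by fun_prop) a b) 0
  have htime : Continuous fun t : ℝ => max t 0 := by fun_prop
  have hexp : Continuous fun t : ℝ => exp (-κ * max t 0) := by fun_prop
  exact hexp.mul (hprimitive.comp htime)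

lemma duhamel_sub (κ : ℝ) (hF : Continuous F) (hG : Continuous G) (t : ℝ) :
    duhamel κ (F - G) t = duhamel κ F t - duhamel κ G t := by
  unfold duhamel
  rw [← mul_sub, ← intervalIntegral.integral_sub]
  · simp only [Pi.sub_apply, mul_sub]
  · exact Continuous.intervalIntegrable (by fun_prop) _ _
  · exact Continuous.intervalIntegrable (by fun_prop) _ _

lemma mul_abs_duhamel_le {B : ℝ} (hκ : 0 ≤ κ) (hB : ∀ s, |F s| ≤ B) (t : ℝ) :
    κ * |duhamel κ F t| ≤ B := by
  have hB0 : 0 ≤ B := (abs_nonneg _).trans (hB 0)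
  set τ := max t 0
  have hτ : 0 ≤ τ := le_max_right _ _
  have hmajorant : Continuous fun s => exp (κ * s) * B := by fun_prop
  have hint : ‖∫ s in (0 : ℝ)..τ, exp (κ * s) * F s‖ ≤ ∫ s in (0 : ℝ)..τ, exp (κ * s) * B := by
    refine intervalIntegral.norm_integral_le_of_norm_le hτ (.of_forall fun s _ => ?_)
      (hmajorant.intervalIntegrable _ _)
    rw [norm_mul, Real.norm_of_nonneg (Real.exp_pos _).le]
    exact mul_le_mul_of_nonneg_left (hB s) (Real.exp_pos _).le
  have hexp : κ * ∫ s in (0 : ℝ)..τ, exp (κ * s) * B = (exp (κ * τ) - 1) * B := by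
    rw [intervalIntegral.integral_mul_const, ← mul_assoc,
      intervalIntegral.mul_integral_comp_mul_left, integral_exp, mul_zero, Real.exp_zero]
  have hcancel : exp (-κ * τ) * exp (κ * τ) = 1 := by
    rw [← Real.exp_add, neg_mul, neg_add_cancel, Real.exp_zero]
  calc κ * |duhamel κ F t|
      = exp (-κ * τ) * (κ * ‖∫ s in (0 : ℝ)..τ, exp (κ * s) * F s‖) := by
        rw [duhamel, abs_mul, abs_of_pos (Real.exp_pos _), Real.norm_eq_abs]; ring
    _ ≤ exp (-κ * τ) * (κ * ∫ s in (0 : ℝ)..τ, exp (κ * s) * B) := by gcongr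
    _ = B - exp (-κ * τ) * B := by rw [hexp]; linear_combination B * hcancel
    _ ≤ B := sub_le_self _ (by positivity)

lemma hasDerivAt_duhamel (κ : ℝ) (hF : Continuous F) {t : ℝ} (ht : 0 < t) :
    HasDerivAt (duhamel κ F) (-κ * duhamel κ F t + F t) t := by
  have hintegrand : Continuous fun s => exp (κ * s) * F s := by fun_prop
  have hint : HasDerivAt (fun u => ∫ s in (0 : ℝ)..u, exp (κ * s) * F s) (exp (κ * t) * F t) t :=
    (hintegrand.integral_hasStrictDerivAt 0 t).hasDerivAt
  have hexp : HasDerivAt (fun u => exp (-κ * u)) (exp (-κ * t) * -κ) t := by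
    simpa using ((hasDerivAt_id t).const_mul (-κ)).exp
  have hpos : duhamel κ F =ᶠ[nhds t]
      fun u => exp (-κ * u) * ∫ s in (0 : ℝ)..u, exp (κ * s) * F s := by
    filter_upwards [lt_mem_nhds ht] with u hu
    rw [duhamel, max_eq_left hu.le]
  refine ((hexp.mul hint).congr_of_eventuallyEq hpos).congr_deriv ?_
  have hcancel : exp (-κ * t) * exp (κ * t) = 1 := by
    rw [← Real.exp_add, neg_mul, neg_add_cancel, Real.exp_zero]
  rw [hpos.self_of_nhds]
  linear_combination F t * hcancel

end Duhamel

/-- A curve of Fourier coefficients, continuous in each coefficient and contained in the ball of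
radius `A` of `HasExpBound`. -/
structure IsBoundedPath (A : ℝ) (a : ℝ → ℤ → ℝ) : Prop where
  continuous : ∀ k, Continuous fun t => a t k
  bound : ∀ t, HasExpBound A (a t)

/-- The correction `ε k² ∫₀ᵗ exp (-(t - s) k⁴) (slopeForcing (a s))ₖ ds` that the nonlinearity adds
to the biharmonic heat flow in Duhamel's formula. -/
def duhamelForcing (ε : ℝ) (a : ℝ → ℤ → ℝ) (t : ℝ) (k : ℤ) : ℝ :=
  ε * k ^ 2 * duhamel (k ^ 4) (fun s => slopeForcing (a s) k) t

lemma sq_mul_abs_duhamel_le {F : ℝ → ℝ} {B : ℝ} (hB : ∀ s, |F s| ≤ B) (k : ℤ) (t : ℝ) :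
    (k : ℝ) ^ 2 * |duhamel (k ^ 4) F t| ≤ B := by
  have hsq : (k : ℝ) ^ 2 ≤ (k : ℝ) ^ 4 := by
    have : k ^ 2 ≤ k ^ 4 := by nlinarith [Int.le_self_sq (k ^ 2)]
    exact_mod_cast this
  exact (mul_le_mul_of_nonneg_right hsq (abs_nonneg _)).trans
    (mul_abs_duhamel_le (by positivity) hB t)

lemma duhamelForcing_zero (ε : ℝ) (t : ℝ) : duhamelForcing ε 0 t = 0 := by
  ext k
  have hzero : (fun _ : ℝ => slopeForcing 0 k) = 0 := by
    ext; simp [slopeForcing_zero]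
  simp only [duhamelForcing, Pi.zero_apply, hzero, duhamel_zero_right, mul_zero]

lemma duhamelForcing_even (ε : ℝ) {a : ℝ → ℤ → ℝ} (ha : ∀ t, Function.Even (a t)) (t : ℝ) :
    Function.Even (duhamelForcing ε a t) := fun k => by
  simp only [duhamelForcing, Int.cast_neg, even_two.neg_pow, (by decide : Even 4).neg_pow,
    (slopeForcing_even (ha _)).eq]

namespace IsBoundedPath

variable {A B D : ℝ} {a b : ℝ → ℤ → ℝ}

lemma zero (hA : 0 ≤ A) : IsBoundedPath A 0 where
  continuous _ := continuous_const
  bound _ k := by simpa using mul_nonneg hA (expWeight_pos k).le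

lemma sub (ha : IsBoundedPath A a) (hb : IsBoundedPath B b) : IsBoundedPath (A + B) (a - b) where
  continuous k := (ha.continuous k).sub (hb.continuous k)
  bound t := (ha.bound t).sub (hb.bound t)

lemma conv (ha : IsBoundedPath A a) (hb : IsBoundedPath B b) :
    IsBoundedPath (convConst * A * B) fun t => intConv (a t) (b t) where
  continuous k := continuous_tsum
    (fun i => (ha.continuous i).mul (hb.continuous (k - i)))
    ((summable_expWeight_mul_expWeight_sub k).mul_left (A * B))
    fun i t => (ha.bound t).norm_mul_sub_le (hb.bound t) k i
  bound t := (ha.bound t).conv (hb.bound t)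

lemma continuous_slopeForcing (ha : IsBoundedPath A a) (k : ℤ) :
    Continuous fun t => slopeForcing (a t) k :=
  (((ha.conv ha).conv ha).continuous k).sub (ha.continuous k)

lemma continuous_duhamelForcing (ha : IsBoundedPath A a) (ε : ℝ) (k : ℤ) :
    Continuous fun t => duhamelForcing ε a t k :=
  (continuous_duhamel _ (ha.continuous_slopeForcing k)).const_mul _

lemma duhamelForcing_sub (ha : IsBoundedPath A a) (hb : IsBoundedPath A b)
    (hab : ∀ t, HasExpBound D (a t - b t)) (ε t : ℝ) :
    HasExpBound (|ε| * (forcingLip A * D)) (duhamelForcing ε a t - duhamelForcing ε b t) := by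
  intro k
  have hdiff := sq_mul_abs_duhamel_le
    (fun s => (ha.bound s).slopeForcing_sub (hb.bound s) (hab s) k) k t
  calc |duhamelForcing ε a t k - duhamelForcing ε b t k|
      = |ε| * ((k : ℝ) ^ 2 *
          |duhamel (k ^ 4) (fun s => (slopeForcing (a s) - slopeForcing (b s)) k) t|) := by
        have hsub := duhamel_sub (k ^ 4) (ha.continuous_slopeForcing k)
          (hb.continuous_slopeForcing k) t
        rw [duhamelForcing, duhamelForcing, ← mul_sub, ← hsub, abs_mul, abs_mul,
          abs_of_nonneg (sq_nonneg (k : ℝ)), mul_assoc]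
        rfl
    _ ≤ |ε| * (forcingLip A * D * expWeight k) := by gcongr
    _ = |ε| * (forcingLip A * D) * expWeight k := by ring

lemma duhamelForcing (ha : IsBoundedPath A a) (ε : ℝ) :
    IsBoundedPath (|ε| * (forcingLip A * A)) (duhamelForcing ε a) where
  continuous := ha.continuous_duhamelForcing ε
  bound t := by
    have h := ha.duhamelForcing_sub (zero (ha.bound 0).nonneg) (D := A)
      (fun s => by simpa using ha.bound s) ε t
    rwa [duhamelForcing_zero, sub_zero] at h

end IsBoundedPath

/-- The Banach space in which the fixed point is found: `b (k, t)` stands for the `k`-th Fourier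
coefficient at time `t` divided by `expWeight k`. -/
abbrev CoeffPath := BoundedContinuousFunction (ℤ × ℝ) ℝ

namespace CoeffPath

/-- The curve of Fourier coefficients represented by an element of `CoeffPath`. -/
def coeff (b : CoeffPath) (t : ℝ) (k : ℤ) : ℝ := expWeight k * b (k, t)

lemma coeff_sub (b c : CoeffPath) (t : ℝ) : coeff (b - c) t = coeff b t - coeff c t := by
  ext k
  simp [coeff, mul_sub]

lemma norm_le_iff {b : CoeffPath} {R : ℝ} (hR : 0 ≤ R) :
    ‖b‖ ≤ R ↔ ∀ t, HasExpBound R (coeff b t) := by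
  rw [BoundedContinuousFunction.norm_le hR, Prod.forall, forall_comm]
  refine forall_congr' fun t => forall_congr' fun k => ?_
  rw [coeff, abs_mul, abs_of_pos (expWeight_pos k), mul_comm,
    mul_le_mul_iff_left₀ (expWeight_pos k), Real.norm_eq_abs]

lemma isBoundedPath_coeff {b : CoeffPath} {R : ℝ} (hb : ‖b‖ ≤ R) : IsBoundedPath R (coeff b) where
  continuous k := by unfold coeff; fun_prop
  bound := (norm_le_iff ((norm_nonneg b).trans hb)).1 hb

lemma norm_sub_le_of_coeff_eq_sub_duhamelForcing {b c b' c' : CoeffPath} {R ε : ℝ}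
    {g : ℝ → ℤ → ℝ} (hb : ‖b‖ ≤ R) (hc : ‖c‖ ≤ R)
    (hb' : coeff b' = g - duhamelForcing ε (coeff b))
    (hc' : coeff c' = g - duhamelForcing ε (coeff c)) :
    ‖b' - c'‖ ≤ |ε| * forcingLip R * ‖b - c‖ := by
  have hcb : ∀ t, HasExpBound ‖b - c‖ (coeff c t - coeff b t) := fun t => by
    simpa only [coeff_sub] using (isBoundedPath_coeff (norm_sub_rev c b).le).bound t
  have hdiff := (isBoundedPath_coeff hc).duhamelForcing_sub (isBoundedPath_coeff hb) hcb ε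
  rw [mul_assoc, norm_le_iff (hdiff 0).nonneg]
  intro t
  rw [coeff_sub, hb', hc', Pi.sub_apply, Pi.sub_apply, sub_sub_sub_cancel_left]
  exact hdiff t

lemma isClosed_forall_even : IsClosed {b : CoeffPath | ∀ t, Function.Even (coeff b t)} := by
  simp only [Function.Even, ofPred_forall, coeff]
  refine isClosed_iInter fun t => isClosed_iInter fun k => isClosed_eq ?_ ?_ <;>
    exact (continuous_eval_const _).const_mul _

end CoeffPath

lemma IsBoundedPath.exists_coeff_eq {A : ℝ} {a : ℝ → ℤ → ℝ} (ha : IsBoundedPath A a) :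
    ∃ b : CoeffPath, CoeffPath.coeff b = a := by
  have hcont : Continuous fun p : ℤ × ℝ => a p.2 p.1 / expWeight p.1 :=
    continuous_prod_of_discrete_left.2 fun k => (ha.continuous k).div_const (expWeight k)
  refine ⟨.ofNormedAddCommGroup _ hcont A fun p => ?_, ?_⟩
  · rw [norm_div, Real.norm_of_nonneg (expWeight_pos p.1).le, div_le_iff₀ (expWeight_pos p.1)]
    exact ha.bound p.2 p.1
  · ext t k
    exact mul_div_cancel₀ _ (expWeight_pos k).ne'

open CoeffPath in
theorem exists_eq_sub_duhamelForcing {A ε : ℝ} {g : ℝ → ℤ → ℝ} (hg : IsBoundedPath A g)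
    (hg_even : ∀ t, Function.Even (g t)) (hε : |ε| * forcingLip (2 * A) ≤ 1 / 2) :
    ∃ a, IsBoundedPath (2 * A) a ∧ (∀ t, Function.Even (a t)) ∧ a = g - duhamelForcing ε a := by
  have hA : 0 ≤ 2 * A := mul_nonneg zero_le_two (hg.bound 0).nonneg
  choose Φ hΦ using fun b : CoeffPath =>
    (hg.sub ((isBoundedPath_coeff (le_refl ‖b‖)).duhamelForcing ε)).exists_coeff_eq
  set s : Set CoeffPath := {b | ‖b‖ ≤ 2 * A} ∩ {b | ∀ t, Function.Even (coeff b t)}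
  have hs : IsClosed s :=
    (isClosed_le continuous_norm continuous_const).inter isClosed_forall_even
  have hmaps : MapsTo Φ s s := by
    rintro b ⟨hb, hb_even⟩
    refine ⟨(norm_le_iff hA).2 fun t => ?_, fun t k => ?_⟩
    · rw [hΦ]
      refine ((hg.sub ((isBoundedPath_coeff hb).duhamelForcing ε)).bound t).mono ?_
      nlinarith [mul_le_mul_of_nonneg_right hε hA]
    · simp only [hΦ, Pi.sub_apply, hg_even t k, duhamelForcing_even ε hb_even t k]
  have hcontr : ContractingWith (1 / 2) (hmaps.restrict Φ s s) := by
    refine ⟨by rw [← NNReal.coe_lt_coe]; norm_num, LipschitzWith.of_dist_le_mul ?_⟩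
    rintro ⟨b, hb, -⟩ ⟨c, hc, -⟩
    simp only [Subtype.dist_eq, MapsTo.val_restrict_apply, dist_eq_norm]
    exact (norm_sub_le_of_coeff_eq_sub_duhamelForcing hb hc (hΦ b) (hΦ c)).trans
      ((mul_le_mul_of_nonneg_right hε (norm_nonneg _)).trans_eq (by norm_num))
  obtain ⟨b, ⟨hb, hb_even⟩, hfix, -⟩ := ContractingWith.exists_fixedPoint' hs.isComplete hmaps
    hcontr (x := 0) ⟨by simpa using hA, fun t k => by simp [coeff]⟩ (edist_ne_top _ _)
  exact ⟨coeff b, isBoundedPath_coeff hb, hb_even, by conv_lhs => rw [← hfix.eq, hΦ]⟩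

/-! ### Slopes close to the biharmonic flow -/

/-- A curve of Fourier coefficients `a t` of the slope `v = ∂ₓu` of a mean-zero odd solution of
`∂ₜu = ε ∂ₓ((∂ₓu)³ - ∂ₓu) - ∂ₓ⁴u`, that is, of a solution of `∂ₜv = ε ∂ₓ²(v³ - v) - ∂ₓ⁴v`. -/
structure IsSlopeCoeff (ε A : ℝ) (a : ℝ → ℤ → ℝ) : Prop extends IsBoundedPath A a where
  even : ∀ t, Function.Even (a t)
  zero : ∀ t, a t 0 = 0
  hasDerivAt : ∀ t, 0 < t → ∀ k, HasDerivAt (fun s => a s k)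
    (-(k : ℝ) ^ 4 * a t k - ε * k ^ 2 * slopeForcing (a t) k) t

/-- The Fourier coefficients of the solution of `∂ₜv = -∂ₓ⁴v` whose initial value is the
trigonometric polynomial with coefficients `α`, frozen at its initial value for negative times. -/
def biharmonicFlow (α : ℤ →₀ ℝ) (t : ℝ) (k : ℤ) : ℝ := α k * exp (-(k : ℝ) ^ 4 * max t 0)

section BiharmonicFlow

variable (α : ℤ →₀ ℝ)

lemma biharmonicFlow_of_nonneg {t : ℝ} (ht : 0 ≤ t) (k : ℤ) :
    biharmonicFlow α t k = α k * exp (-(k : ℝ) ^ 4 * t) := by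
  rw [biharmonicFlow, max_eq_left ht]

lemma biharmonicFlow_even (hα : Function.Even α) (t : ℝ) :
    Function.Even (biharmonicFlow α t) := fun k => by
  rw [biharmonicFlow, biharmonicFlow, hα, Int.cast_neg, (by decide : Even 4).neg_pow]

lemma abs_biharmonicFlow_le (t : ℝ) (k : ℤ) : |biharmonicFlow α t k| ≤ |α k| := by
  rw [biharmonicFlow, abs_mul, abs_of_pos (Real.exp_pos _)]
  refine mul_le_of_le_one_right (abs_nonneg _) (Real.exp_le_one_iff.2 ?_)
  exact mul_nonpos_of_nonpos_of_nonneg (neg_nonpos.2 (by positivity)) (le_max_right _ _)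

lemma exists_isBoundedPath_biharmonicFlow : ∃ A, IsBoundedPath A (biharmonicFlow α) := by
  refine ⟨∑ i ∈ α.support, |α i| / expWeight i, fun k => ?_, fun t k => ?_⟩
  · unfold biharmonicFlow; fun_prop
  refine (abs_biharmonicFlow_le α t k).trans ?_
  have hnonneg : ∀ i ∈ α.support, 0 ≤ |α i| / expWeight i := fun i _ =>
    div_nonneg (abs_nonneg _) (expWeight_pos i).le
  rw [← div_le_iff₀ (expWeight_pos k)]
  by_cases hk : k ∈ α.support
  · exact Finset.single_le_sum hnonneg hk
  · simpa [Finsupp.notMem_support_iff.1 hk] using Finset.sum_nonneg hnonneg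

lemma hasDerivAt_biharmonicFlow {t : ℝ} (ht : 0 < t) (k : ℤ) :
    HasDerivAt (fun s => biharmonicFlow α s k) (-(k : ℝ) ^ 4 * biharmonicFlow α t k) t := by
  have hexp : HasDerivAt (fun s => α k * exp (-(k : ℝ) ^ 4 * s))
      (α k * (exp (-(k : ℝ) ^ 4 * t) * -(k : ℝ) ^ 4)) t := by
    simpa using ((hasDerivAt_id t).const_mul (-(k : ℝ) ^ 4)).exp.const_mul (α k)
  have hpos : (fun s => biharmonicFlow α s k) =ᶠ[nhds t] fun s => α k * exp (-(k : ℝ) ^ 4 * s) := by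
    filter_upwards [lt_mem_nhds ht] with s hs using biharmonicFlow_of_nonneg α hs.le k
  refine (hexp.congr_of_eventuallyEq hpos).congr_deriv ?_
  rw [biharmonicFlow_of_nonneg α ht.le]
  ring

end BiharmonicFlow

lemma eventually_abs_mul_le {δ : ℝ} (hδ : 0 < δ) (M : ℝ) : ∀ᶠ ε in nhds (0 : ℝ), |ε| * M ≤ δ := by
  have hcont : Continuous fun ε : ℝ => |ε| * M := by fun_prop
  exact (hcont.tendsto 0).eventually_le_const (by simpa using hδ)

theorem eventually_exists_isSlopeCoeff_near_biharmonicFlow {α : ℤ →₀ ℝ} (hα : Function.Even α)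
    (hα0 : α 0 = 0) {δ : ℝ} (hδ : 0 < δ) :
    ∀ᶠ ε in nhds 0, ∃ A a, IsSlopeCoeff ε A a ∧
      ∀ t, HasExpBound δ (biharmonicFlow α t - a t) := by
  obtain ⟨A, hg⟩ := exists_isBoundedPath_biharmonicFlow α
  filter_upwards [eventually_abs_mul_le one_half_pos (forcingLip (2 * A)),
    eventually_abs_mul_le hδ (forcingLip (2 * A) * (2 * A))] with ε hcontract hclose
  obtain ⟨a, ha, ha_even, hfix⟩ :=
    exists_eq_sub_duhamelForcing hg (biharmonicFlow_even α hα) hcontract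
  have hfix_apply : ∀ t k, a t k = biharmonicFlow α t k - duhamelForcing ε a t k := fun t k =>
    congrFun (congrFun hfix t) k
  refine ⟨2 * A, a, ⟨ha, ha_even, fun t => ?_, fun t ht k => ?_⟩, fun t => ?_⟩
  · simp [hfix_apply, biharmonicFlow, duhamelForcing, hα0]
  · have hforcing := (hasDerivAt_duhamel ((k : ℝ) ^ 4) (ha.continuous_slopeForcing k) ht).const_mul
      (ε * (k : ℝ) ^ 2)
    rw [funext fun s => hfix_apply s k, hfix_apply t k]
    refine ((hasDerivAt_biharmonicFlow α ht k).sub hforcing).congr_deriv ?_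
    unfold duhamelForcing
    ring
  · have hdiff : biharmonicFlow α t - a t = duhamelForcing ε a t :=
      funext fun k => by rw [Pi.sub_apply, hfix_apply, sub_sub_cancel]
    rw [hdiff]
    exact ((ha.duhamelForcing ε).bound t).mono hclose

/-! ### Joint smoothness from partial derivatives -/

lemma hasFDerivAt_of_continuousOn_partialDeriv {f f₁ f₂ : ℝ × ℝ → ℝ} {U : Set (ℝ × ℝ)}
    (hU : IsOpen U) (hf₁ : ContinuousOn f₁ U) (hf₂ : ContinuousOn f₂ U)
    (hderiv₁ : ∀ p ∈ U, HasDerivAt (fun r => f (r, p.2)) (f₁ p) p.1)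
    (hderiv₂ : ∀ p ∈ U, HasDerivAt (fun r => f (p.1, r)) (f₂ p) p.2) {p : ℝ × ℝ} (hp : p ∈ U) :
    HasFDerivAt f
      (f₁ p • ContinuousLinearMap.fst ℝ ℝ ℝ + f₂ p • ContinuousLinearMap.snd ℝ ℝ ℝ) p := by
  have hpU : U ∈ nhds p := hU.mem_nhds hp
  have hstrict := hasStrictFDerivAt_uncurry_coprod (𝕜 := ℝ) (u := p) (f := fun r x => f (r, x))
    (f₁ := fun r x => ContinuousLinearMap.toSpanSingletonCLE (f₁ (r, x)))
    (f₂ := fun r x => ContinuousLinearMap.toSpanSingletonCLE (f₂ (r, x)))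
    (by filter_upwards [hpU] with q hq using (hderiv₁ q hq).hasFDerivAt)
    (by filter_upwards [hpU] with q hq using (hderiv₂ q hq).hasFDerivAt)
    (ContinuousLinearMap.toSpanSingletonCLE.continuous.continuousAt.comp (hf₁.continuousAt hpU))
    (ContinuousLinearMap.toSpanSingletonCLE.continuous.continuousAt.comp (hf₂.continuousAt hpU))
  refine hstrict.hasFDerivAt.congr_fderiv ?_
  ext <;> simp [Function.HasUncurry.uncurry]

lemma contDiffOn_infty_of_partialDeriv_mem {S : Set (ℝ × ℝ → ℝ)} {U : Set (ℝ × ℝ)} (hU : IsOpen U)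
    (hcont : ∀ f ∈ S, ContinuousOn f U)
    (hfst : ∀ f ∈ S, ∃ g ∈ S, ∀ p ∈ U, HasDerivAt (fun r => f (r, p.2)) (g p) p.1)
    (hsnd : ∀ f ∈ S, ∃ g ∈ S, ∀ p ∈ U, HasDerivAt (fun r => f (p.1, r)) (g p) p.2) :
    ∀ f ∈ S, ContDiffOn ℝ (⊤ : ℕ∞) f U := by
  suffices hfinite : ∀ n : ℕ, ∀ f ∈ S, ContDiffOn ℝ n f U from fun f hf =>
    contDiffOn_infty.2 fun n => hfinite n f hf
  intro n
  induction n with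
  | zero => exact fun f hf => by simpa using hcont f hf
  | succ n ih =>
    intro f hf
    obtain ⟨f₁, hf₁, hderiv₁⟩ := hfst f hf
    obtain ⟨f₂, hf₂, hderiv₂⟩ := hsnd f hf
    have hfderiv := fun p => hasFDerivAt_of_continuousOn_partialDeriv hU (hcont f₁ hf₁)
      (hcont f₂ hf₂) hderiv₁ hderiv₂ (p := p)
    rw [Nat.cast_add, Nat.cast_one, contDiffOn_succ_iff_fderiv_of_isOpen hU]
    refine ⟨fun p hp => (hfderiv p hp).differentiableAt.differentiableWithinAt,
      fun h => absurd h (by simp), ?_⟩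
    exact (((ih f₁ hf₁).smul contDiffOn_const).add ((ih f₂ hf₂).smul contDiffOn_const)).congr
      fun p hp => (hfderiv p hp).fderiv

lemma exists_hasDerivAt_mem_adjoin {X : Type*} {s : Set (X → ℝ)} {U : Set X} {γ : X → ℝ → X}
    {τ : X → ℝ} (hγ : ∀ p, γ p (τ p) = p)
    (hs : ∀ f ∈ s, ∃ g ∈ Algebra.adjoin ℝ s, ∀ p ∈ U, HasDerivAt (fun r => f (γ p r)) (g p) (τ p))
    {f : X → ℝ} (hf : f ∈ Algebra.adjoin ℝ s) :
    ∃ g ∈ Algebra.adjoin ℝ s, ∀ p ∈ U, HasDerivAt (fun r => f (γ p r)) (g p) (τ p) := by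
  induction hf using Algebra.adjoin_induction with
  | mem f hf => exact hs f hf
  | algebraMap r => exact ⟨0, zero_mem _, fun p _ => hasDerivAt_const _ r⟩
  | add f g _ _ ihf ihg =>
    obtain ⟨f', hf', hdf⟩ := ihf
    obtain ⟨g', hg', hdg⟩ := ihg
    exact ⟨f' + g', add_mem hf' hg', fun p hp => (hdf p hp).add (hdg p hp)⟩
  | mul f g hf hg ihf ihg =>
    obtain ⟨f', hf', hdf⟩ := ihf
    obtain ⟨g', hg', hdg⟩ := ihg
    refine ⟨f' * g + f * g', add_mem (mul_mem hf' hg) (mul_mem hf hg'), fun p hp => ?_⟩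
    refine ((hdf p hp).mul (hdg p hp)).congr_deriv ?_
    simp only [hγ, Pi.add_apply, Pi.mul_apply]

/-! ### From Fourier coefficients to classical solutions -/

/-- The `m`-th `x`-derivative, at `p = (t, x)`, of `∑ₖ cₖ(t) cos (k x + θ)`. -/
def trigJet (θ : ℝ) (c : ℝ → ℤ → ℝ) (m : ℕ) (p : ℝ × ℝ) : ℝ :=
  trigSeries (θ + m * (π / 2)) (fun k => k ^ m * c p.1 k) p.2

namespace IsBoundedPath

variable {A : ℝ} {c : ℝ → ℤ → ℝ}

lemma continuous_trigJet (hc : IsBoundedPath A c) (θ : ℝ) (m : ℕ) : Continuous (trigJet θ c m) := by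
  refine continuous_tsum (fun k => ?_) ((summable_abs_pow_mul_expWeight m).mul_left A)
    fun k p => (abs_mul_cos_le _ _).trans ((hc.bound p.1).abs_pow_mul_le m k)
  have hck := hc.continuous k
  fun_prop

lemma hasDerivAt_trigJet (hc : IsBoundedPath A c) (θ : ℝ) (m : ℕ) (t x : ℝ) :
    HasDerivAt (fun y => trigJet θ c m (t, y)) (trigJet θ c (m + 1) (t, x)) x := by
  have hpow : ∀ k : ℤ, (k : ℝ) ^ (m + 1) * c t k = k * (k ^ m * c t k) := fun k => by ring
  have hsummable := (hc.bound t).summable_abs_pow_mul (m + 1)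
  simp only [hpow] at hsummable
  refine (hasDerivAt_trigSeries (θ + m * (π / 2)) ((hc.bound t).summable_abs_pow_mul m) hsummable
    x).congr_deriv ?_
  simp only [trigJet, hpow]
  congr 1
  push_cast
  ring

end IsBoundedPath

/-- The Fourier sine coefficients of the height whose slope has Fourier cosine coefficients `a`.
The value at `k = 0` is `0`, which for `a t 0 = 0` agrees with `k * heightCoeff a t k = a t k`. -/
def heightCoeff (a : ℝ → ℤ → ℝ) (t : ℝ) (k : ℤ) : ℝ := a t k / k

/-- The `m`-th `x`-derivative of the height whose slope has Fourier coefficients `a`. -/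
def heightJet (a : ℝ → ℤ → ℝ) : ℕ → ℝ × ℝ → ℝ := trigJet (-(π / 2)) (heightCoeff a)

/-- The `m`-th `x`-derivative of the cube of the slope with Fourier coefficients `a`. -/
def slopeCubeJet (a : ℝ → ℤ → ℝ) : ℕ → ℝ × ℝ → ℝ :=
  trigJet 0 fun t => intConv (intConv (a t) (a t)) (a t)

lemma IsBoundedPath.heightCoeff {A : ℝ} {a : ℝ → ℤ → ℝ} (ha : IsBoundedPath A a) :
    IsBoundedPath A (heightCoeff a) where
  continuous k := (ha.continuous k).div_const k
  bound t k := by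
    refine le_trans ?_ (ha.bound t k)
    rw [_root_.heightCoeff, abs_div]
    rcases eq_or_ne k 0 with rfl | hk
    · simp
    · exact div_le_self (abs_nonneg _) (mod_cast Int.one_le_abs hk)

namespace IsSlopeCoeff

variable {ε A : ℝ} {a : ℝ → ℤ → ℝ}

lemma mul_heightCoeff (ha : IsSlopeCoeff ε A a) (t : ℝ) (k : ℤ) :
    k * heightCoeff a t k = a t k := by
  rcases eq_or_ne k 0 with rfl | hk
  · simp [ha.zero t]
  · exact mul_div_cancel₀ _ (Int.cast_ne_zero.2 hk)

lemma hasDerivAt_heightCoeff (ha : IsSlopeCoeff ε A a) {t : ℝ} (ht : 0 < t) (k : ℤ) :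
    HasDerivAt (fun s => heightCoeff a s k)
      (-(k : ℝ) ^ 4 * heightCoeff a t k - ε * k * slopeForcing (a t) k) t := by
  refine ((ha.hasDerivAt t ht k).div_const (k : ℝ)).congr_deriv ?_
  rcases eq_or_ne k 0 with rfl | hk
  · simp
  · have hk' : (k : ℝ) ≠ 0 := Int.cast_ne_zero.2 hk
    unfold heightCoeff
    field_simp

lemma heightJet_one (ha : IsSlopeCoeff ε A a) (t x : ℝ) :
    heightJet a 1 (t, x) = trigSeries 0 (a t) x := by
  simp only [heightJet, trigJet, pow_one, ha.mul_heightCoeff, Nat.cast_one, one_mul,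
    neg_add_cancel]

lemma slopeCubeJet_zero (ha : IsSlopeCoeff ε A a) : slopeCubeJet a 0 = heightJet a 1 ^ 3 := by
  ext ⟨t, x⟩
  rw [Pi.pow_apply, ha.heightJet_one, ← trigSeries_cube (ha.bound t) (ha.even t)]
  simp [slopeCubeJet, trigJet]

lemma hasDerivAt_heightJet (ha : IsSlopeCoeff ε A a) (m : ℕ) (t x : ℝ) :
    HasDerivAt (fun y => heightJet a m (t, y)) (heightJet a (m + 1) (t, x)) x :=
  ha.toIsBoundedPath.heightCoeff.hasDerivAt_trigJet _ m t x

lemma isBoundedPath_cube (ha : IsSlopeCoeff ε A a) :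
    IsBoundedPath (convConst * (convConst * A * A) * A)
      fun t => intConv (intConv (a t) (a t)) (a t) :=
  (ha.toIsBoundedPath.conv ha.toIsBoundedPath).conv ha.toIsBoundedPath

lemma hasDerivAt_slopeCubeJet (ha : IsSlopeCoeff ε A a) (m : ℕ) (t x : ℝ) :
    HasDerivAt (fun y => slopeCubeJet a m (t, y)) (slopeCubeJet a (m + 1) (t, x)) x :=
  ha.isBoundedPath_cube.hasDerivAt_trigJet _ m t x

lemma trigSeries_time_deriv (ha : IsSlopeCoeff ε A a) (m : ℕ) (t x : ℝ) :
    trigSeries (-(π / 2) + m * (π / 2)) (fun k => (k : ℝ) ^ m *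
        (-(k : ℝ) ^ 4 * heightCoeff a t k - ε * k * slopeForcing (a t) k)) x =
      ε * (slopeCubeJet a (m + 1) (t, x) - heightJet a (m + 2) (t, x)) -
        heightJet a (m + 4) (t, x) := by
  have hheight := fun n => (summable_norm_mul_cos (-(π / 2) + (n : ℕ) * (π / 2))
    ((ha.toIsBoundedPath.heightCoeff.bound t).summable_abs_pow_mul n) x).of_norm
  have hcube := (summable_norm_mul_cos (0 + (m + 1 : ℕ) * (π / 2))
    ((ha.isBoundedPath_cube.bound t).summable_abs_pow_mul (m + 1)) x).of_norm
  simp only [heightJet, slopeCubeJet, trigJet, trigSeries]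
  rw [← hcube.tsum_sub (hheight (m + 2)), ← tsum_mul_left,
    ← ((hcube.sub (hheight (m + 2))).mul_left ε).tsum_sub (hheight (m + 4))]
  refine tsum_congr fun k => ?_
  set y := (k : ℝ) * x + (-(π / 2) + m * (π / 2)) with hy
  have hphase_cube : (k : ℝ) * x + (0 + (m + 1 : ℕ) * (π / 2)) = y + π := by
    rw [hy]; push_cast; ring
  have hphase_two : (k : ℝ) * x + (-(π / 2) + (m + 2 : ℕ) * (π / 2)) = y + π := by
    rw [hy]; push_cast; ring
  have hphase_four : (k : ℝ) * x + (-(π / 2) + (m + 4 : ℕ) * (π / 2)) = y + 2 * π := by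
    rw [hy]; push_cast; ring
  rw [hphase_cube, hphase_two, hphase_four, Real.cos_add_two_pi, Real.cos_add_pi, slopeForcing,
    Pi.sub_apply, ← ha.mul_heightCoeff t k]
  ring

lemma abs_pow_mul_time_deriv_le (ha : IsSlopeCoeff ε A a) (m : ℕ) (t : ℝ) (k : ℤ) :
    |(k : ℝ) ^ m * (-(k : ℝ) ^ 4 * heightCoeff a t k - ε * k * slopeForcing (a t) k)| ≤
      A * (|(k : ℝ)| ^ (m + 4) * expWeight k) +
        |ε| * (forcingLip A * A * (|(k : ℝ)| ^ (m + 1) * expWeight k)) := by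
  have hforcing : HasExpBound (forcingLip A * A) (slopeForcing (a t)) := by
    have hzero : HasExpBound A 0 := (IsBoundedPath.zero (ha.bound t).nonneg).bound t
    simpa [slopeForcing_zero] using (ha.bound t).slopeForcing_sub hzero (by simpa using ha.bound t)
  have hlinear := (ha.toIsBoundedPath.heightCoeff.bound t).abs_pow_mul_le (m + 4) k
  have hcubic := mul_le_mul_of_nonneg_left (hforcing.abs_pow_mul_le (m + 1) k) (abs_nonneg ε)
  rw [← abs_mul] at hcubic
  calc |(k : ℝ) ^ m * (-(k : ℝ) ^ 4 * heightCoeff a t k - ε * k * slopeForcing (a t) k)|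
      = |(k : ℝ) ^ (m + 4) * heightCoeff a t k +
          ε * ((k : ℝ) ^ (m + 1) * slopeForcing (a t) k)| := by
        rw [← abs_neg]; ring_nf
    _ ≤ _ := (abs_add_le _ _).trans (add_le_add hlinear hcubic)

lemma hasDerivAt_heightJet_time (ha : IsSlopeCoeff ε A a) (m : ℕ) {t : ℝ} (ht : 0 < t) (x : ℝ) :
    HasDerivAt (fun s => heightJet a m (s, x))
      (ε * (slopeCubeJet a (m + 1) (t, x) - heightJet a (m + 2) (t, x)) -
        heightJet a (m + 4) (t, x)) t := by
  rw [← ha.trigSeries_time_deriv]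
  exact hasDerivAt_trigSeries_param (-(π / 2) + m * (π / 2)) isOpen_Ioi isPreconnected_Ioi
    (((summable_abs_pow_mul_expWeight (m + 4)).mul_left A).add
      (((summable_abs_pow_mul_expWeight (m + 1)).mul_left _).mul_left |ε|))
    (fun s _ k => ha.abs_pow_mul_time_deriv_le m s k)
    (fun s hs k => (ha.hasDerivAt_heightCoeff hs k).const_mul _) ht
    ((ha.toIsBoundedPath.heightCoeff.bound t).summable_abs_pow_mul m) x

lemma exists_hasDerivAt_mem_adjoin_heightJet (ha : IsSlopeCoeff ε A a) {f : ℝ × ℝ → ℝ}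
    (hf : f ∈ Algebra.adjoin ℝ (range (heightJet a))) :
    ∃ g ∈ Algebra.adjoin ℝ (range (heightJet a)), ∀ p ∈ univ,
      HasDerivAt (fun x => f (p.1, x)) (g p) p.2 := by
  refine exists_hasDerivAt_mem_adjoin (γ := fun p x => (p.1, x)) (τ := Prod.snd) (fun _ => rfl)
    ?_ hf
  rintro _ ⟨m, rfl⟩
  exact ⟨heightJet a (m + 1), Algebra.subset_adjoin ⟨_, rfl⟩,
    fun p _ => ha.hasDerivAt_heightJet m p.1 p.2⟩

lemma slopeCubeJet_mem_adjoin (ha : IsSlopeCoeff ε A a) (m : ℕ) :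
    slopeCubeJet a m ∈ Algebra.adjoin ℝ (range (heightJet a)) := by
  induction m with
  | zero =>
    rw [ha.slopeCubeJet_zero]
    exact pow_mem (Algebra.subset_adjoin (mem_range_self 1)) 3
  | succ m ih =>
    obtain ⟨g, hg, hderiv⟩ := ha.exists_hasDerivAt_mem_adjoin_heightJet ih
    have heq : slopeCubeJet a (m + 1) = g := funext fun p =>
      (ha.hasDerivAt_slopeCubeJet m p.1 p.2).unique (hderiv p (mem_univ p))
    rwa [heq]

lemma contDiffOn_heightJet (ha : IsSlopeCoeff ε A a) (m : ℕ) :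
    ContDiffOn ℝ (⊤ : ℕ∞) (heightJet a m) (Ioi 0 ×ˢ univ) := by
  have hmem : ∀ n, heightJet a n ∈ Algebra.adjoin ℝ (range (heightJet a)) := fun n =>
    Algebra.subset_adjoin ⟨n, rfl⟩
  refine contDiffOn_infty_of_partialDeriv_mem (S := Algebra.adjoin ℝ (range (heightJet a)))
    (isOpen_Ioi.prod isOpen_univ) ?_ ?_ ?_ _ (hmem m)
  · have hle : Algebra.adjoin ℝ (range (heightJet a)) ≤ continuousSubalgebra :=
      Algebra.adjoin_le (range_subset_iff.2 fun n =>
        ha.toIsBoundedPath.heightCoeff.continuous_trigJet _ n)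
    exact fun f hf => Continuous.continuousOn (hle hf)
  · intro f hf
    refine exists_hasDerivAt_mem_adjoin (γ := fun p s => (s, p.2)) (τ := Prod.fst) (fun _ => rfl)
      ?_ hf
    rintro _ ⟨n, rfl⟩
    exact ⟨ε • (slopeCubeJet a (n + 1) - heightJet a (n + 2)) - heightJet a (n + 4),
      sub_mem (Subalgebra.smul_mem _ (sub_mem (ha.slopeCubeJet_mem_adjoin _) (hmem _)) ε) (hmem _),
      fun p hp => ha.hasDerivAt_heightJet_time n hp.1 p.2⟩
  · intro f hf
    obtain ⟨g, hg, hderiv⟩ := ha.exists_hasDerivAt_mem_adjoin_heightJet hf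
    exact ⟨g, hg, fun p _ => hderiv p (mem_univ p)⟩

end IsSlopeCoeff

/-- A smooth odd `2π`-periodic classical solution, for positive times, of the one-dimensional
equation `∂ₜu = ε ∂ₓ((∂ₓu)³ - ∂ₓu) - ∂ₓ⁴u`. -/
structure IsOddPeriodicFilm (ε : ℝ) (u : ℝ → ℝ → ℝ) : Prop where
  contDiffOn : ContDiffOn ℝ (⊤ : ℕ∞) (fun p : ℝ × ℝ => u p.1 p.2) (Ioi 0 ×ˢ univ)
  hasDerivAt : ∀ t, 0 < t → ∀ x, HasDerivAt (fun s => u s x)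
    (ε * deriv (fun y => deriv (u t) y ^ 3 - deriv (u t) y) x - iteratedDeriv 4 (u t) x) t
  odd : ∀ t, Function.Odd (u t)
  periodic : ∀ t, Function.Periodic (u t) (2 * π)

/-- The height whose slope has Fourier coefficients `a`. -/
def slopeHeight (a : ℝ → ℤ → ℝ) (t x : ℝ) : ℝ := heightJet a 0 (t, x)

lemma slopeHeight_eq_trigSeries (a : ℝ → ℤ → ℝ) (t : ℝ) :
    slopeHeight a t = trigSeries (-(π / 2)) (heightCoeff a t) := by
  ext x
  simp [slopeHeight, heightJet, trigJet]

namespace IsSlopeCoeff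

variable {ε A : ℝ} {a : ℝ → ℤ → ℝ}

lemma iteratedDeriv_slopeHeight (ha : IsSlopeCoeff ε A a) (n : ℕ) (t : ℝ) :
    iteratedDeriv n (slopeHeight a t) = fun x => heightJet a n (t, x) := by
  induction n with
  | zero => exact iteratedDeriv_zero
  | succ n ih =>
    rw [iteratedDeriv_succ, ih]
    exact funext fun x => (ha.hasDerivAt_heightJet n t x).deriv

lemma deriv_slopeHeight (ha : IsSlopeCoeff ε A a) (t : ℝ) :
    deriv (slopeHeight a t) = trigSeries 0 (a t) := by
  rw [← iteratedDeriv_one, ha.iteratedDeriv_slopeHeight]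
  exact funext (ha.heightJet_one t)

lemma deriv_cube_sub_slopeHeight (ha : IsSlopeCoeff ε A a) (t x : ℝ) :
    deriv (fun y => deriv (slopeHeight a t) y ^ 3 - deriv (slopeHeight a t) y) x =
      slopeCubeJet a 1 (t, x) - heightJet a 2 (t, x) := by
  have hjet : ∀ y, deriv (slopeHeight a t) y ^ 3 - deriv (slopeHeight a t) y =
      slopeCubeJet a 0 (t, y) - heightJet a 1 (t, y) := fun y => by
    rw [ha.deriv_slopeHeight, ha.slopeCubeJet_zero, Pi.pow_apply, ha.heightJet_one]
  simp only [hjet]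
  exact ((ha.hasDerivAt_slopeCubeJet 0 t x).sub (ha.hasDerivAt_heightJet 1 t x)).deriv

theorem isOddPeriodicFilm (ha : IsSlopeCoeff ε A a) : IsOddPeriodicFilm ε (slopeHeight a) where
  contDiffOn := ha.contDiffOn_heightJet 0
  hasDerivAt t ht x := by
    rw [ha.deriv_cube_sub_slopeHeight, ha.iteratedDeriv_slopeHeight]
    exact ha.hasDerivAt_heightJet_time 0 ht x
  odd t := by
    rw [slopeHeight_eq_trigSeries]
    exact trigSeries_neg_pi_div_two_odd _
  periodic t := by
    rw [slopeHeight_eq_trigSeries]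
    exact trigSeries_periodic _ _

end IsSlopeCoeff

/-! ### A steepening solution in one dimension -/

theorem eventually_exists_isOddPeriodicFilm_near_biharmonicFlow {α : ℤ →₀ ℝ}
    (hα : Function.Even α) (hα0 : α 0 = 0) {δ : ℝ} (hδ : 0 < δ) :
    ∀ᶠ ε in nhds 0, ∃ u, IsOddPeriodicFilm ε u ∧
      ∀ t x, |trigSeries 0 (biharmonicFlow α t) x - deriv (u t) x| ≤ δ := by
  have hweight : 0 < ∑' k, expWeight k :=
    summable_expWeight.tsum_pos (fun k => (expWeight_pos k).le) 0 (expWeight_pos 0)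
  filter_upwards [eventually_exists_isSlopeCoeff_near_biharmonicFlow hα hα0 (div_pos hδ hweight)]
    with ε ⟨A, a, ha, hclose⟩
  refine ⟨slopeHeight a, ha.isOddPeriodicFilm, fun t x => ?_⟩
  obtain ⟨B, hflow⟩ := exists_isBoundedPath_biharmonicFlow α
  rw [ha.deriv_slopeHeight, ← trigSeries_sub 0 (hflow.bound t).summable_abs
    (ha.bound t).summable_abs]
  calc |trigSeries 0 (biharmonicFlow α t - a t) x|
      ≤ ∑' k, |(biharmonicFlow α t - a t) k| := abs_trigSeries_le 0 (hclose t).summable_abs x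
    _ ≤ δ / (∑' k, expWeight k) * ∑' k, expWeight k := (hclose t).tsum_abs_le
    _ = δ := div_mul_cancel₀ _ hweight.ne'

/-- Fourier coefficients for which the biharmonic flow passes at time `1` through the slope profile
`v = 11/10 (cos x - (1/9) cos 3x)`. At its maximum `x = 0` this profile has `v'' = 0` and
`v'''' < 0`, so the flow `∂ₜv = -∂ₓ⁴v` raises the maximum. -/
def steepeningCoeff : ℤ →₀ ℝ :=
  Finsupp.onFinset {1, -1, 3, -3}
    (fun k => if |k| = 1 then 11 / 20 * exp 1 else if |k| = 3 then -(11 / 180) * exp 81 else 0)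
    fun k hk => by
      by_contra hmem
      simp only [Finset.mem_insert, Finset.mem_singleton] at hmem
      exact hk (by rw [if_neg (by grind), if_neg (by grind)])

lemma steepeningCoeff_even : Function.Even steepeningCoeff := fun k => by
  simp [steepeningCoeff]

lemma steepeningCoeff_zero : steepeningCoeff 0 = 0 := by
  simp [steepeningCoeff]

lemma trigSeries_biharmonicFlow_steepeningCoeff {t : ℝ} (ht : 0 ≤ t) (x : ℝ) :
    trigSeries 0 (biharmonicFlow steepeningCoeff t) x =
      11 / 10 * (exp (-(t - 1)) * cos x - 1 / 9 * exp (-81 * (t - 1)) * cos (3 * x)) := by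
  have hsupport : ∀ k ∉ ({1, -1, 3, -3} : Finset ℤ),
      biharmonicFlow steepeningCoeff t k * cos (k * x + 0) = 0 := fun k hk => by
    have hk0 : steepeningCoeff k = 0 :=
      Finsupp.notMem_support_iff.1 fun h => hk (Finsupp.support_onFinset_subset h)
    rw [biharmonicFlow, hk0, zero_mul, zero_mul]
  have hone : biharmonicFlow steepeningCoeff t 1 = 11 / 20 * exp (-(t - 1)) := by
    rw [biharmonicFlow_of_nonneg _ ht, neg_sub, sub_eq_add_neg 1 t, Real.exp_add]
    simp [steepeningCoeff, mul_assoc]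
  have hthree : biharmonicFlow steepeningCoeff t 3 = -(11 / 180) * exp (-81 * (t - 1)) := by
    rw [biharmonicFlow_of_nonneg _ ht, (by ring : -81 * (t - 1) = 81 + -81 * t), Real.exp_add]
    norm_num [steepeningCoeff, mul_assoc]
  have hflow_even := biharmonicFlow_even _ steepeningCoeff_even t
  rw [trigSeries, tsum_eq_sum hsupport, Finset.sum_insert (by decide),
    Finset.sum_insert (by decide), Finset.sum_insert (by decide), Finset.sum_singleton,
    hflow_even, hflow_even, hone, hthree]
  simp only [Int.cast_neg, Int.cast_one, Int.cast_ofNat, one_mul, neg_mul, add_zero, Real.cos_neg]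
  ring

lemma abs_trigSeries_steepeningCoeff_le (x : ℝ) :
    |trigSeries 0 (biharmonicFlow steepeningCoeff 1) x| ≤ 44 / 45 := by
  rw [trigSeries_biharmonicFlow_steepeningCoeff zero_le_one, Real.cos_three_mul]
  simp only [sub_self, neg_zero, mul_zero, Real.exp_zero]
  have hle := Real.cos_le_one x
  have hge := Real.neg_one_le_cos x
  rw [abs_le]
  constructor
  · nlinarith [mul_nonneg (sq_nonneg (cos x + 1)) (by linarith : 0 ≤ 2 - cos x)]
  · nlinarith [mul_nonneg (sq_nonneg (cos x - 1)) (by linarith : 0 ≤ 2 + cos x)]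

lemma lt_trigSeries_steepeningCoeff :
    102 / 100 < trigSeries 0 (biharmonicFlow steepeningCoeff (1 + 1 / 81)) 0 := by
  rw [trigSeries_biharmonicFlow_steepeningCoeff (by norm_num)]
  have hone : 1 - 1 / 81 ≤ exp (-(1 / 81)) := Real.one_sub_le_exp_neg _
  have hthree : exp (-1) ≤ 1 / 2 := Real.exp_neg_one_lt_half.le
  norm_num at hone ⊢
  linarith

theorem eventually_exists_isOddPeriodicFilm_steepening :
    ∀ᶠ ε in nhds 0, ∃ u, IsOddPeriodicFilm ε u ∧ (∀ x, |deriv (u 1) x| ≤ 99 / 100) ∧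
      1 < deriv (u (1 + 1 / 81)) 0 := by
  filter_upwards [eventually_exists_isOddPeriodicFilm_near_biharmonicFlow steepeningCoeff_even
    steepeningCoeff_zero (by norm_num : (0 : ℝ) < 1 / 100)] with ε ⟨u, hu, hclose⟩
  refine ⟨u, hu, fun x => ?_, ?_⟩
  · have hdiff := abs_sub_abs_le_abs_sub (deriv (u 1) x)
      (trigSeries 0 (biharmonicFlow steepeningCoeff 1) x)
    rw [abs_sub_comm] at hdiff
    linarith [hclose 1 x, abs_trigSeries_steepeningCoeff_le x]
  · linarith [(abs_le.1 (hclose (1 + 1 / 81) 0)).2, lt_trigSeries_steepeningCoeff]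

/-! ### Ridge solutions on the torus -/

lemma setIntegral_eq_zero_of_odd {E : Type*} [MeasurableSpace E] [AddGroup E] [MeasurableNeg E]
    {μ : Measure E} [μ.IsNegInvariant] {s : Set E} (hs : -s = s) {f : E → ℝ}
    (hf : Function.Odd f) : ∫ x in s, f x ∂μ = 0 := by
  have hreflect := (Measure.measurePreserving_neg μ).setIntegral_preimage_emb
    (MeasurableEquiv.neg E).measurableEmbedding f s
  simp only [neg_preimage, hs, hf _, integral_neg] at hreflect
  linarith

lemma neg_Qd (d : ℕ) : -Qd d = Qd d := by
  ext x
  simp [Qd]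

/-- The ridge function `x ↦ φ (K xᵢ)`. -/
def ridge {d : ℕ} (K : ℝ) (i : Fin d) (φ : ℝ → ℝ) (x : Ed d) : ℝ := φ (K * x i)

section Ridge

variable {d : ℕ} (K : ℝ) (i : Fin d) {φ : ℝ → ℝ}

lemma hasFDerivAt_ridge (hφ : Differentiable ℝ φ) (x : Ed d) :
    HasFDerivAt (ridge K i φ)
      (deriv φ (K * x i) • K • (EuclideanSpace.proj i : Ed d →L[ℝ] ℝ)) x :=
  (hφ (K * x i)).hasDerivAt.comp_hasFDerivAt x
    ((EuclideanSpace.proj i : Ed d →L[ℝ] ℝ).hasFDerivAt.const_mul K)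

lemma pd_ridge_self (hφ : Differentiable ℝ φ) :
    pd (ridge K i φ) i = ridge K i (K • deriv φ) := by
  ext x
  rw [pd, (hasFDerivAt_ridge K i hφ x).fderiv]
  simp [ridge, mul_comm]

lemma pd_ridge_of_ne (hφ : Differentiable ℝ φ) {j : Fin d} (hj : j ≠ i) :
    pd (ridge K i φ) j = 0 := by
  ext x
  rw [pd, (hasFDerivAt_ridge K i hφ x).fderiv]
  simp [hj.symm]

lemma pd_zero (j : Fin d) : pd 0 j = 0 := by
  ext x
  simp [pd]

lemma gradSq_ridge (hφ : Differentiable ℝ φ) (x : Ed d) :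
    gradSq (ridge K i φ) x = (K * deriv φ (K * x i)) ^ 2 := by
  rw [gradSq, Finset.sum_eq_single i]
  · rw [pd_ridge_self K i hφ]
    rfl
  · intro j _ hj
    simp [pd_ridge_of_ne K i hφ hj]
  · simp

lemma gradNorm_ridge (hφ : Differentiable ℝ φ) (x : Ed d) :
    gradNorm (ridge K i φ) x = |K * deriv φ (K * x i)| := by
  rw [gradNorm, gradSq_ridge K i hφ, Real.sqrt_sq_eq_abs]

lemma lapl_ridge (hφ : ContDiff ℝ 2 φ) :
    lapl (ridge K i φ) = ridge K i (K ^ 2 • iteratedDeriv 2 φ) := by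
  have hφ1 : Differentiable ℝ φ := hφ.differentiable two_ne_zero
  have hφ2 : Differentiable ℝ (deriv φ) := hφ.differentiable_deriv_two
  ext x
  rw [lapl, Finset.sum_eq_single i]
  · rw [pd_ridge_self K i hφ1, pd_ridge_self K i (hφ2.const_smul K)]
    simp [ridge, iteratedDeriv_succ, deriv_const_smul_field, sq, mul_assoc]
  · intro j _ hj
    rw [pd_ridge_of_ne K i hφ1 hj, pd_zero, Pi.zero_apply]
  · simp

lemma lapl_lapl_ridge (hφ : ContDiff ℝ 4 φ) :
    lapl (lapl (ridge K i φ)) = ridge K i (K ^ 4 • iteratedDeriv 4 φ) := by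
  have hφ2 : ContDiff ℝ 2 (K ^ 2 • iteratedDeriv 2 φ) := by
    rw [iteratedDeriv_eq_iterate]
    exact (hφ.iterate_deriv' 2 2).const_smul (K ^ 2)
  rw [lapl_ridge K i (hφ.of_le (by norm_num)), lapl_ridge K i hφ2]
  have hiter : iteratedDeriv 2 (iteratedDeriv 2 φ) = iteratedDeriv 4 φ := by
    simp only [iteratedDeriv_eq_iterate, ← Function.iterate_add_apply]
  ext x
  simp only [ridge, Pi.smul_apply, iteratedDeriv_const_smul_field, hiter, smul_smul, ← pow_add]

lemma slopeDiv_ridge (hφ : ContDiff ℝ 2 φ) (x : Ed d) :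
    slopeDiv (ridge K i φ) x =
      K * deriv (fun y => (K * deriv φ y) ^ 3 - K * deriv φ y) (K * x i) := by
  have hφ1 : Differentiable ℝ φ := hφ.differentiable two_ne_zero
  have hφ2 : Differentiable ℝ (deriv φ) := hφ.differentiable_deriv_two
  rw [slopeDiv, Finset.sum_eq_single i]
  · have hflux : (fun y => (gradSq (ridge K i φ) y - 1) * pd (ridge K i φ) i y) =
        ridge K i fun y => (K * deriv φ y) ^ 3 - K * deriv φ y := by
      ext y
      rw [gradSq_ridge K i hφ1, pd_ridge_self K i hφ1]
      simp only [ridge, Pi.smul_apply, smul_eq_mul]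
      ring
    have hflux_diff : Differentiable ℝ fun y => (K * deriv φ y) ^ 3 - K * deriv φ y :=
      ((hφ2.const_mul K).pow 3).sub (hφ2.const_mul K)
    rw [hflux, pd_ridge_self K i hflux_diff]
    rfl
  · intro j _ hj
    simp only [pd_ridge_of_ne K i hφ1 hj, Pi.zero_apply, mul_zero]
    exact congrFun (pd_zero j) x
  · simp

end Ridge

lemma periodicSpace_ridge {d : ℕ} (n : ℕ) (i : Fin d) {φ : ℝ → ℝ}
    (hφ : Function.Periodic φ (2 * π)) : PeriodicSpace (ridge n i φ) := by
  intro j x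
  rcases eq_or_ne j i with rfl | hj
  · simpa [ridge, mul_add] using hφ.nat_mul n (n * x j)
  · simp [ridge, hj.symm]

lemma ridge_odd {d : ℕ} (K : ℝ) (i : Fin d) {φ : ℝ → ℝ} (hφ : Function.Odd φ) :
    Function.Odd (ridge K i φ) := fun x => by
  simp [ridge, hφ (K * x i)]

/-- The parabolic rescaling to `ℝ^d` of a one-dimensional solution `u`. Time `1` is moved to time
`0`; solutions with coefficient `ε = (ν K²)⁻¹` become solutions with dissipation `ν`, and slopes
are preserved. -/
def ridgeFilm {d : ℕ} (ν K : ℝ) (i : Fin d) (u : ℝ → ℝ → ℝ) (t : ℝ) : Ed d → ℝ :=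
  ridge K i (K⁻¹ • u (1 + ν * K ^ 4 * t))

namespace IsOddPeriodicFilm

variable {ε ν K : ℝ} {u : ℝ → ℝ → ℝ} {d : ℕ} {t : ℝ}

lemma contDiff (hu : IsOddPeriodicFilm ε u) (ht : 0 < t) : ContDiff ℝ (⊤ : ℕ∞) (u t) :=
  contDiffOn_univ.1 (hu.contDiffOn.comp (f := fun x => (t, x)) (by fun_prop)
    fun _ _ => ⟨ht, mem_univ _⟩)

lemma periodicSpace_ridgeFilm (hu : IsOddPeriodicFilm ε u) (ν : ℝ) (n : ℕ) (i : Fin d) (t : ℝ) :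
    PeriodicSpace (ridgeFilm ν n i u t) :=
  periodicSpace_ridge n i fun x => by simp only [Pi.smul_apply, hu.periodic _ x]

lemma ridgeFilm_odd (hu : IsOddPeriodicFilm ε u) (ν K : ℝ) (i : Fin d) (t : ℝ) :
    Function.Odd (ridgeFilm ν K i u t) :=
  ridge_odd K i fun x => by simp only [Pi.smul_apply, hu.odd _ x, smul_neg]

lemma contDiff_ridgeFilm (hu : IsOddPeriodicFilm ε u) (i : Fin d)
    (ht : 0 < 1 + ν * K ^ 4 * t) : ContDiff ℝ (⊤ : ℕ∞) (ridgeFilm ν K i u t) := by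
  have hcoord : ContDiff ℝ (⊤ : ℕ∞) fun x : Ed d =>
      K * (EuclideanSpace.proj i : Ed d →L[ℝ] ℝ) x := by fun_prop
  exact contDiff_const.mul ((hu.contDiff ht).comp hcoord)

lemma gradNorm_ridgeFilm (hu : IsOddPeriodicFilm ε u) (hK : K ≠ 0) (i : Fin d)
    (ht : 0 < 1 + ν * K ^ 4 * t) (x : Ed d) :
    gradNorm (ridgeFilm ν K i u t) x = |deriv (u (1 + ν * K ^ 4 * t)) (K * x i)| := by
  have hdiff := (hu.contDiff ht).differentiable (by simp)
  rw [ridgeFilm, gradNorm_ridge K i (hdiff.const_smul _), deriv_const_smul_field]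
  simp [mul_inv_cancel_left₀ hK]

lemma contDiffOn_ridgeFilm (hu : IsOddPeriodicFilm ε u) (i : Fin d) :
    ContDiffOn ℝ (⊤ : ℕ∞) (fun p : ℝ × Ed d => ridgeFilm ν K i u p.1 p.2)
      {p | 0 < 1 + ν * K ^ 4 * p.1} := by
  have hscale : ContDiff ℝ (⊤ : ℕ∞) fun p : ℝ × Ed d =>
      (1 + ν * K ^ 4 * p.1, K * (EuclideanSpace.proj i : Ed d →L[ℝ] ℝ) p.2) := by fun_prop
  exact contDiffOn_const.mul (hu.contDiffOn.comp hscale.contDiffOn fun _ hp => ⟨hp, mem_univ _⟩)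

lemma hasDerivAt_ridgeFilm (hu : IsOddPeriodicFilm (1 / (ν * K ^ 2)) u) (hν : ν ≠ 0) (hK : K ≠ 0)
    (i : Fin d) (ht : 0 < 1 + ν * K ^ 4 * t) (x : Ed d) :
    HasDerivAt (fun s => ridgeFilm ν K i u s x)
      (slopeDiv (ridgeFilm ν K i u t) x - ν * lapl (lapl (ridgeFilm ν K i u t)) x) t := by
  have hsmooth : ContDiff ℝ (⊤ : ℕ∞) (K⁻¹ • u (1 + ν * K ^ 4 * t)) :=
    contDiff_const.smul (hu.contDiff ht)
  have htime : HasDerivAt (fun s => 1 + ν * K ^ 4 * s) (ν * K ^ 4) t := by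
    simpa using ((hasDerivAt_id t).const_mul (ν * K ^ 4)).const_add 1
  refine (((hu.hasDerivAt _ ht (K * x i)).comp t htime).const_mul K⁻¹).congr_deriv ?_
  rw [ridgeFilm, slopeDiv_ridge K i (contDiff_infty.1 hsmooth _),
    lapl_lapl_ridge K i (contDiff_infty.1 hsmooth _)]
  simp only [ridge, deriv_const_smul_field, iteratedDeriv_const_smul_field, Pi.smul_apply,
    smul_eq_mul, mul_inv_cancel_left₀ hK]
  field_simp

end IsOddPeriodicFilm

lemma exists_nat_isOddPeriodicFilm_steepening {ν : ℝ} (hν : 0 < ν) :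
    ∃ n : ℕ, n ≠ 0 ∧ ∃ u, IsOddPeriodicFilm (1 / (ν * (n : ℝ) ^ 2)) u ∧
      (∀ x, |deriv (u 1) x| ≤ 99 / 100) ∧ 1 < deriv (u (1 + 1 / 81)) 0 := by
  have hsq : Tendsto (fun n : ℕ => ν * (n : ℝ) ^ 2) atTop atTop :=
    ((tendsto_pow_atTop two_ne_zero).comp tendsto_natCast_atTop_atTop).const_mul_atTop hν
  have hsmall : Tendsto (fun n : ℕ => 1 / (ν * (n : ℝ) ^ 2)) atTop (nhds 0) := by
    simp only [one_div]
    exact hsq.inv_tendsto_atTop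
  exact ((eventually_ne_atTop 0).and
    (hsmall.eventually eventually_exists_isOddPeriodicFilm_steepening)).exists

/-- Corollary 1.6, disproving Conjecture 1 in dimension `d`: for every
`ν > 0` there exist smooth `2π`-periodic mean-zero initial data `h₀` with `‖∇h₀‖_∞ < 1`,
a time `t₀ > 0`, and a smooth `2π`-periodic classical solution `h` of
`∂_t h = ∇·((|∇h|²−1)∇h) − νΔ²h` on `[0,t₀] × 𝕋^d` with `h(0,·) = h₀` and
`‖∇h(t₀,·)‖_∞ > 1`. -/
theorem stmt5 (d : ℕ) (hd : 1 ≤ d) (ν : ℝ) (hν : 0 < ν) :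
    ∃ (h₀ : Ed d → ℝ) (t₀ : ℝ) (h : ℝ → Ed d → ℝ),
      ContDiff ℝ (⊤ : ℕ∞) h₀ ∧
      PeriodicSpace h₀ ∧
      (∫ x in Qd d, h₀ x) = 0 ∧
      (⨆ x : Ed d, gradNorm h₀ x) < 1 ∧
      0 < t₀ ∧
      (∀ t ∈ Icc 0 t₀, PeriodicSpace (h t)) ∧
      ContDiffOn ℝ (⊤ : ℕ∞) (fun p : ℝ × Ed d => h p.1 p.2) (Icc 0 t₀ ×ˢ univ) ∧
      h 0 = h₀ ∧
      (∀ (x : Ed d), ∀ t ∈ Icc 0 t₀,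
        HasDerivWithinAt (fun s => h s x)
          (slopeDiv (h t) x - ν * lapl (lapl (h t)) x) (Icc 0 t₀) t) ∧
      ∃ x : Ed d, 1 < gradNorm (h t₀) x := by
  obtain ⟨n, hn, u, hu, hslope₀, hslope₁⟩ := exists_nat_isOddPeriodicFilm_steepening hν
  have hn' : (n : ℝ) ≠ 0 := Nat.cast_ne_zero.2 hn
  have htime {t : ℝ} (ht : 0 ≤ t) : 0 < 1 + ν * (n : ℝ) ^ 4 * t := by positivity
  have ht₀ : 0 < 1 / (81 * ν * (n : ℝ) ^ 4) := by positivity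
  let h := ridgeFilm ν n (⟨0, hd⟩ : Fin d) u
  have hperiodic t : PeriodicSpace (h t) := hu.periodicSpace_ridgeFilm ν n _ t
  refine ⟨h 0, _, h, hu.contDiff_ridgeFilm _ (htime le_rfl), hperiodic 0,
    setIntegral_eq_zero_of_odd (neg_Qd d) (hu.ridgeFilm_odd ν n _ 0), ?_, ht₀,
    fun t _ => hperiodic t, (hu.contDiffOn_ridgeFilm _).mono fun p hp => htime hp.1.1, rfl,
    fun x t ht => (hu.hasDerivAt_ridgeFilm hν.ne' hn' _ (htime ht.1) x).hasDerivWithinAt, 0, ?_⟩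
  · refine (ciSup_le fun x => ?_).trans_lt (by norm_num : (99 / 100 : ℝ) < 1)
    simpa [h, hu.gradNorm_ridgeFilm hn' _ (htime le_rfl)] using hslope₀ _
  · have hend : 1 + ν * (n : ℝ) ^ 4 * (1 / (81 * ν * (n : ℝ) ^ 4)) = 1 + 1 / 81 := by field_simp
    rw [hu.gradNorm_ridgeFilm hn' _ (htime ht₀.le), hend, PiLp.zero_apply, mul_zero]
    exact hslope₁.trans_le (le_abs_self _)
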